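/- arXiv:2505.14475 — 2 statements merged into one kernel-verified Lean document; each statement's English description precedes it below -/
import Mathlib

section
/- Let p ≥ 1 and let V : ℤ → ℝ be p-periodic. Let x ∈ ℝ lie in the interior (as a subset of ℝ) of Σ, and suppose r > 0 with (x − r, x + r) contained in the interior of Σ. Suppose Θ̃ : ℂ → ℂ is complex-analytic on ℂ₊ ∪ {z : |z − x| < r}, maps ℂ₊ into ℂ₊, satisfies Re Θ̃(z) ∈ [−π, 0] and 2 cos(p Θ̃(z)) = Δ(z) for all z ∈ ℂ₊, and takes real values on (x − r, x + r). Then Θ̃'(x) and Θ̃'''(x) are strictly positive real numbers. -/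
/-!
The positivity is a property of every analytic `f : ℂ₊ → ℂ₊` with bounded real part that extends
analytically through a real neighbourhood of `x` and is real there. Write `f z = f x + c₁ (z - x) + c₂ (z - x)² + c₃ (z - x)³ + ⋯`
with real `cᵢ`.

The Schwarz–Pick inequality for two points `z, w` of `ℂ₊`, divided by `Im w`, tends to Julia's
inequality `Im z |f z - f x|² ≤ c₁ Im (f z) |z - x|²` as `w → x` vertically (`julia`). Since
`f z ≠ f x`, this gives `c₁ > 0`. It also says exactly that
`h z = 1 / (c₁ (z - x)) - 1 / (f z - f x)` has nonnegative imaginary part on `ℂ₊`. This `h` is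
again regular and real near `x`, with `h x = c₂ / c₁²` and `h' x = (c₁ c₃ - c₂²) / c₁³`. Hence
`h' x ≥ 0`, that is `c₁ c₃ ≥ c₂²`, so `c₃ ≥ 0`. If `c₃ = 0`, then `c₂ = 0` and `h' x = 0`, and
Julia's inequality for `h` forces `h = h x = 0` on `ℂ₊`; so `f` is affine with slope `c₁ > 0`,
which contradicts the bound on its real part (`herglotz_derivs`).
-/

open scoped ENNReal

/-- The one-step transfer matrix `[[z - V(n), -1], [1, 0]]`. -/
noncomputable def transferMatrix (V : ℤ → ℝ) (n : ℤ) (z : ℂ) : Matrix (Fin 2) (Fin 2) ℂ :=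
  !![z - (V n : ℂ), -1; 1, 0]

/-- The monodromy matrix `Φ(z) = T(p) ⋯ T(1)` of a `p`-periodic potential. -/
noncomputable def monodromyMatrix (p : ℕ) (V : ℤ → ℝ) (z : ℂ) : Matrix (Fin 2) (Fin 2) ℂ :=
  ((List.range p).map fun i => transferMatrix V ((p : ℤ) - i) z).prod

/-- The Floquet discriminant `Δ(z) = tr Φ(z)`. -/
noncomputable def floquetDiscriminant (p : ℕ) (V : ℤ → ℝ) (z : ℂ) : ℂ :=
  Matrix.trace (monodromyMatrix p V z)

open Complex Filter Topology ComplexConjugate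

/-! ### The Schwarz–Pick inequality in the upper half plane -/

theorem normSq_sub_conj (a b : ℂ) :
    normSq (a - conj b) = normSq (a - b) + 4 * (a.im * b.im) := by
  simp only [normSq_apply, sub_re, sub_im, conj_re, conj_im]
  ring

theorem sub_conj_ne_zero {a b : ℂ} (ha : 0 < a.im) (hb : 0 < b.im) : a - conj b ≠ 0 := by
  intro h
  have := congrArg Complex.im h
  simp at this
  linarith

/-- The inverse Cayley transform based at `w` maps the unit disc into the upper half plane. -/
theorem im_cayley {w ζ : ℂ} (hw : 0 < w.im) (hζ : ‖ζ‖ < 1) :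
    0 < ((w - conj w * ζ) / (1 - ζ)).im := by
  have h1 : (1 : ℂ) - ζ ≠ 0 := by
    intro h
    have : ζ = 1 := by linear_combination -h
    simp [this] at hζ
  have h2 : 0 < normSq (1 - ζ) := normSq_pos.2 h1
  have h3 : normSq ζ < 1 := by
    rw [normSq_eq_norm_sq]
    nlinarith [norm_nonneg ζ]
  have h4 : ((w - conj w * ζ) / (1 - ζ)).im = w.im * (1 - normSq ζ) / normSq (1 - ζ) := by
    rw [div_im]
    simp only [sub_re, sub_im, mul_re, mul_im, conj_re, conj_im, one_re, one_im, normSq_apply]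
    ring
  rw [h4]
  exact div_pos (mul_pos hw (by linarith)) h2

/-- Schwarz–Pick inequality for maps of the upper half plane into itself, with denominators
cleared. -/
theorem schwarz_pick_of_pos {g : ℂ → ℂ} (hd : DifferentiableOn ℂ g {z | 0 < z.im})
    (hg : ∀ z : ℂ, 0 < z.im → 0 < (g z).im) {z w : ℂ} (hz : 0 < z.im) (hw : 0 < w.im) :
    z.im * w.im * normSq (g z - conj (g w)) ≤ (g z).im * (g w).im * normSq (z - conj w) := by
  have hne : ∀ ζ : ℂ, ‖ζ‖ < 1 → (1 : ℂ) - ζ ≠ 0 := by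
    intro ζ hζ h
    have : ζ = 1 := by linear_combination -h
    simp [this] at hζ
  -- `F` is `g` conjugated by the Cayley transforms based at `w` and at `g w`.
  set F : ℂ → ℂ := fun ζ =>
    (g ((w - conj w * ζ) / (1 - ζ)) - g w) / (g ((w - conj w * ζ) / (1 - ζ)) - conj (g w)) with hF
  have hFd : DifferentiableOn ℂ F (Metric.ball 0 1) := by
    have hc : DifferentiableOn ℂ (fun ζ : ℂ => g ((w - conj w * ζ) / (1 - ζ)))
        (Metric.ball 0 1) := by
      refine hd.comp (t := {z | 0 < z.im}) ?_ ?_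
      · refine DifferentiableOn.div (by fun_prop) (by fun_prop) ?_
        intro ζ hζ
        exact hne ζ (by simpa using hζ)
      · intro ζ hζ
        exact im_cayley hw (by simpa using hζ)
    refine DifferentiableOn.div (hc.sub_const _) (hc.sub_const _) ?_
    intro ζ hζ
    exact sub_conj_ne_zero (hg _ (im_cayley hw (by simpa using hζ))) (hg _ hw)
  have hFm : Set.MapsTo F (Metric.ball 0 1) (Metric.closedBall 0 1) := by
    intro ζ hζ
    have him := hg _ (im_cayley hw (show ‖ζ‖ < 1 by simpa using hζ))
    rw [mem_closedBall_zero_iff, hF]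
    simp only [norm_div]
    refine div_le_one_of_le₀ ?_ (norm_nonneg _)
    rw [← sq_le_sq₀ (norm_nonneg _) (norm_nonneg _), ← normSq_eq_norm_sq, ← normSq_eq_norm_sq,
      normSq_sub_conj]
    have := mul_pos him (hg _ hw)
    linarith
  have hF0 : F 0 = 0 := by simp [hF]
  have hzw := sub_conj_ne_zero hz hw
  have hzw2 : 0 < normSq (z - conj w) := normSq_pos.2 hzw
  have hgzw2 : 0 < normSq (g z - conj (g w)) :=
    normSq_pos.2 (sub_conj_ne_zero (hg _ hz) (hg _ hw))
  have hζ : ‖(z - w) / (z - conj w)‖ < 1 := by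
    rw [norm_div, div_lt_one (norm_pos_iff.2 hzw), ← sq_lt_sq₀ (norm_nonneg _) (norm_nonneg _),
      ← normSq_eq_norm_sq, ← normSq_eq_norm_sq, normSq_sub_conj]
    have := mul_pos hz hw
    linarith
  have key := norm_le_norm_of_mapsTo_ball hFd hFm hF0 hζ
  have hinv : (w - conj w * ((z - w) / (z - conj w))) / (1 - (z - w) / (z - conj w)) = z := by
    rw [div_eq_iff (hne _ hζ)]
    field_simp
    ring
  rw [hF] at key
  simp only [hinv] at key
  rw [← sq_le_sq₀ (norm_nonneg _) (norm_nonneg _), ← normSq_eq_norm_sq, ← normSq_eq_norm_sq,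
    map_div₀, map_div₀, div_le_div_iff₀ hgzw2 hzw2] at key
  have e1 := normSq_sub_conj z w
  have e2 := normSq_sub_conj (g z) (g w)
  nlinarith

/-- Schwarz–Pick for maps into the closed upper half plane: perturb `g` to `g + εi` and let
`ε → 0`. -/
theorem schwarz_pick {g : ℂ → ℂ} (hd : DifferentiableOn ℂ g {z | 0 < z.im})
    (hg : ∀ z : ℂ, 0 < z.im → 0 ≤ (g z).im) {z w : ℂ} (hz : 0 < z.im) (hw : 0 < w.im) :
    z.im * w.im * normSq (g z - conj (g w)) ≤ (g z).im * (g w).im * normSq (z - conj w) := by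
  have h : ∀ ε : ℝ, 0 < ε → z.im * w.im * normSq ((g z + ε * I) - conj (g w + ε * I)) ≤
      (g z + ε * I).im * (g w + ε * I).im * normSq (z - conj w) := by
    intro ε hε
    refine schwarz_pick_of_pos (g := fun z => g z + ε * I) (hd.add_const _) ?_ hz hw
    intro u hu
    have := hg u hu
    simp
    linarith
  have hcl : Continuous fun ε : ℝ =>
      z.im * w.im * normSq ((g z + ε * I) - conj (g w + ε * I)) := by fun_prop
  have hcr : Continuous fun ε : ℝ =>
      (g z + ε * I).im * (g w + ε * I).im * normSq (z - conj w) := by fun_prop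
  have hl := (hcl.tendsto 0).mono_left (nhdsWithin_le_nhds (s := Set.Ioi 0))
  have hr := (hcr.tendsto 0).mono_left (nhdsWithin_le_nhds (s := Set.Ioi 0))
  have := le_of_tendsto_of_tendsto hl hr
    (eventually_nhdsWithin_of_forall fun ε hε => h ε hε)
  simpa using this

/-! ### Julia's inequality at a real boundary point -/

theorem tendsto_vertical (x : ℝ) :
    Tendsto (fun t : ℝ => (x : ℂ) + t * I) (𝓝[>] 0) (𝓝 (x : ℂ)) := by
  have hc : Continuous fun t : ℝ => (x : ℂ) + t * I := by fun_prop
  simpa using (hc.tendsto 0).mono_left (nhdsWithin_le_nhds (s := Set.Ioi 0))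

/-- `Im g(x + it) / t` is the real part of the difference quotient of `g` in the direction `i`. -/
theorem tendsto_im_div {g : ℂ → ℂ} {c : ℂ} {x : ℝ} (hc : HasDerivAt g c (x : ℂ))
    (hx : (g x).im = 0) :
    Tendsto (fun t : ℝ => (g (x + t * I)).im / t) (𝓝[>] 0) (𝓝 c.re) := by
  have h1 : Tendsto (fun t : ℝ => (x : ℂ) + t * I) (𝓝[>] 0) (𝓝[≠] (x : ℂ)) := by
    refine tendsto_nhdsWithin_iff.2 ⟨tendsto_vertical x, ?_⟩
    refine eventually_nhdsWithin_of_forall fun t ht => ?_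
    have : t ≠ 0 := ne_of_gt ht
    simpa using this
  have h2 := (continuous_re.tendsto c).comp ((hasDerivAt_iff_tendsto_slope.1 hc).comp h1)
  refine h2.congr' (eventually_nhdsWithin_of_forall fun t ht => ?_)
  have ht0 : t ≠ 0 := ne_of_gt ht
  simp only [Function.comp_apply, slope_def_field, add_sub_cancel_left]
  rw [div_re]
  simp [hx, normSq_apply]
  field_simp

/-- Julia's inequality: the limit of Schwarz–Pick, divided by `Im w`, as `w → x` vertically.
Where `g z ≠ g x` and `c.re > 0`, it says `Im (-1 / (g z - g x)) ≥ Im (-1 / (c.re * (z - x)))`. -/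
theorem julia {g : ℂ → ℂ} (hd : DifferentiableOn ℂ g {z | 0 < z.im})
    (hg : ∀ z : ℂ, 0 < z.im → 0 ≤ (g z).im) {c : ℂ} {x : ℝ} (hc : HasDerivAt g c (x : ℂ))
    (hx : (g x).im = 0) {z : ℂ} (hz : 0 < z.im) :
    z.im * normSq (g z - g x) ≤ (g z).im * c.re * normSq (z - x) := by
  have hv := tendsto_vertical x
  have hgv : Tendsto (fun t : ℝ => g (x + t * I)) (𝓝[>] 0) (𝓝 (g x)) :=
    hc.continuousAt.tendsto.comp hv
  have hl : Tendsto (fun t : ℝ => z.im * normSq (g z - conj (g (x + t * I)))) (𝓝[>] 0)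
      (𝓝 (z.im * normSq (g z - conj (g x)))) := by
    have hcont : Continuous fun u : ℂ => z.im * normSq (g z - conj u) := by fun_prop
    exact (hcont.tendsto _).comp hgv
  have hr : Tendsto (fun t : ℝ => (g z).im * ((g (x + t * I)).im / t) *
      normSq (z - conj ((x : ℂ) + t * I))) (𝓝[>] 0)
      (𝓝 ((g z).im * c.re * normSq (z - conj (x : ℂ)))) := by
    have hcont : Continuous fun u : ℂ => normSq (z - conj u) := by fun_prop
    exact ((tendsto_im_div hc hx).const_mul _).mul ((hcont.tendsto _).comp hv)
  have h := le_of_tendsto_of_tendsto hl hr (eventually_nhdsWithin_of_forall fun t ht => ?_)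
  · rwa [conj_eq_iff_im.2 hx, conj_ofReal] at h
  · have ht' : 0 < t := ht
    have hw : ((x : ℂ) + t * I).im = t := by simp
    have := schwarz_pick hd hg hz (w := (x : ℂ) + t * I) (by rw [hw]; exact ht')
    rw [hw] at this
    have h3 : (g z).im * ((g (x + t * I)).im / t) * normSq (z - conj ((x : ℂ) + t * I)) =
      ((g z).im * (g (x + t * I)).im * normSq (z - conj ((x : ℂ) + t * I))) / t := by ring
    beta_reduce
    rw [h3, le_div_iff₀ ht']
    linarith

theorem deriv_re_nonneg {g : ℂ → ℂ} (hg : ∀ z : ℂ, 0 < z.im → 0 ≤ (g z).im) {c : ℂ} {x : ℝ}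
    (hc : HasDerivAt g c (x : ℂ)) (hx : (g x).im = 0) : 0 ≤ c.re := by
  refine ge_of_tendsto (tendsto_im_div hc hx) (eventually_nhdsWithin_of_forall fun t ht => ?_)
  have ht' : 0 < t := ht
  exact div_nonneg (hg _ (by simpa using ht')) ht'.le

/-! ### Real Taylor coefficients -/

theorem deriv_im_zero {g : ℂ → ℂ} {c : ℂ} {x : ℝ} (hc : HasDerivAt g c (x : ℂ))
    (hreal : ∀ᶠ y : ℝ in 𝓝 x, (g y).im = 0) : c.im = 0 := by
  have h0 : HasDerivAt (fun y : ℝ => g y) c x := hc.comp_ofReal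
  have h1 : HasDerivAt (fun y : ℝ => (g y).im) c.im x :=
    (imCLM.hasFDerivAt.comp_hasDerivAt x h0)
  have h2 : HasDerivAt (fun y : ℝ => (g y).im) 0 x :=
    (hasDerivAt_const x (0 : ℝ)).congr_of_eventuallyEq hreal
  exact h1.unique h2

theorem dslope_real {g : ℂ → ℂ} {x : ℝ} (hd : DifferentiableAt ℂ g (x : ℂ))
    (hreal : ∀ᶠ y : ℝ in 𝓝 x, (g y).im = 0) :
    ∀ᶠ y : ℝ in 𝓝 x, (dslope g x y).im = 0 := by
  filter_upwards [hreal] with y hy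
  by_cases hyx : y = x
  · subst hyx
    rw [dslope_same]
    exact deriv_im_zero hd.hasDerivAt hreal
  · rw [dslope_of_ne _ (by exact_mod_cast hyx), slope_def_field, div_im]
    simp [hy, hreal.self_of_nhds]

/-! ### Positivity of the first and third derivatives -/

/-- The half-plane statement: a self-map of the upper half plane with bounded real part, analytic
at `x` and real on the real axis near `x`, has strictly positive first and third derivatives
at `x`. -/
theorem herglotz_derivs {f : ℂ → ℂ} {x : ℝ} (hd : DifferentiableOn ℂ f {z | 0 < z.im})
    (han : AnalyticAt ℂ f (x : ℂ))
    (hf : ∀ z : ℂ, 0 < z.im → 0 < (f z).im)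
    (hreal : ∀ᶠ y : ℝ in 𝓝 x, (f y).im = 0)
    {A B : ℝ} (hbd : ∀ z : ℂ, 0 < z.im → (f z).re ∈ Set.Icc A B) :
    (0 < (iteratedDeriv 1 f x).re ∧ (iteratedDeriv 1 f x).im = 0)
    ∧ (0 < (iteratedDeriv 3 f x).re ∧ (iteratedDeriv 3 f x).im = 0) := by
  have hp := han.hasFPowerSeriesAt
  -- Near `x`: `f z = f x + (z - x) q z`, `q z = q x + (z - x) s z`,
  -- so `q x`, `s x`, `deriv s x` are the Taylor coefficients of order 1, 2, 3.
  set q := dslope f (x : ℂ) with hq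
  set s := dslope q (x : ℂ) with hs
  have hpq := hp.has_fpower_series_dslope_fslope
  have hps := hpq.has_fpower_series_dslope_fslope
  rw [← hq] at hpq hps
  rw [← hs] at hps
  set c₁ := iteratedDeriv 1 f (x : ℂ) with hc₁
  have hfx : (f x).im = 0 := hreal.self_of_nhds
  have hf1 : HasDerivAt f c₁ (x : ℂ) := by
    rw [hc₁, iteratedDeriv_one]; exact han.differentiableAt.hasDerivAt
  have hqx : q x = c₁ := by rw [hq, dslope_same, hc₁, iteratedDeriv_one]
  have hqd : DifferentiableAt ℂ q (x : ℂ) := hpq.differentiableAt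
  have hq1 : HasDerivAt q (s x) (x : ℂ) := by
    rw [hs, dslope_same]; exact hqd.hasDerivAt
  have hs1 : HasDerivAt s (iteratedDeriv 3 f (x : ℂ) / 6) (x : ℂ) := by
    have h := hps.hasDerivAt
    have e : (FormalMultilinearSeries.fslope (FormalMultilinearSeries.fslope
        (FormalMultilinearSeries.ofScalars ℂ fun n => iteratedDeriv n f (x : ℂ) / (n.factorial : ℂ)))) 1
        (fun _ => 1) = iteratedDeriv 3 f (x : ℂ) / 6 := by
      change FormalMultilinearSeries.coeff _ 1 = _
      rw [FormalMultilinearSeries.coeff_fslope, FormalMultilinearSeries.coeff_fslope,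
        FormalMultilinearSeries.coeff_ofScalars]
      norm_num [Nat.factorial]
    rwa [e] at h
  set c₃ := iteratedDeriv 3 f (x : ℂ) with hc₃
  have hqr : ∀ᶠ y : ℝ in 𝓝 x, (q y).im = 0 := dslope_real han.differentiableAt hreal
  have hsr : ∀ᶠ y : ℝ in 𝓝 x, (s y).im = 0 := dslope_real hqd hqr
  have hc₁im : c₁.im = 0 := deriv_im_zero hf1 hreal
  have hc₃im : c₃.im = 0 := by
    have := deriv_im_zero hs1 hsr
    simpa using this
  have hsx : (s x).im = 0 := hsr.self_of_nhds
  have hjul : ∀ z : ℂ, 0 < z.im → z.im * normSq (f z - f x) ≤ (f z).im * c₁.re * normSq (z - x) :=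
    fun z hz => julia hd (fun u hu => (hf u hu).le) hf1 hfx hz
  have hzx : ∀ z : ℂ, 0 < z.im → z - x ≠ 0 := by
    intro z hz h
    have := congrArg Complex.im h
    simp at this
    linarith
  have hfzx : ∀ z : ℂ, 0 < z.im → f z - f x ≠ 0 := by
    intro z hz h
    have := congrArg Complex.im h
    have := hf z hz
    simp [hfx] at *
    linarith
  have hc₁pos : 0 < c₁.re := by
    have hI : (0 : ℝ) < I.im := by simp
    have h1 := hjul I hI
    have h2 := normSq_pos.2 (hfzx I hI)
    have h3 := normSq_pos.2 (hzx I hI)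
    by_contra hneg
    have h4 : (f I).im * c₁.re * normSq (I - x) ≤ 0 :=
      mul_nonpos_of_nonpos_of_nonneg
        (mul_nonpos_of_nonneg_of_nonpos (hf I hI).le (not_lt.1 hneg)) h3.le
    rw [I_im] at h1
    linarith
  refine ⟨⟨hc₁pos, hc₁im⟩, ?_, hc₃im⟩
  obtain ⟨a, ha⟩ : ∃ a : ℝ, c₁ = a := ⟨c₁.re, by apply Complex.ext <;> simp [hc₁im]⟩
  obtain ⟨b, hb⟩ : ∃ b : ℝ, s x = b := ⟨(s x).re, by apply Complex.ext <;> simp [hsx]⟩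
  obtain ⟨d, hd3⟩ : ∃ d : ℝ, c₃ = d := ⟨c₃.re, by apply Complex.ext <;> simp [hc₃im]⟩
  rw [ha, ofReal_re] at hc₁pos
  rw [ha] at hqx
  have ha0 : (a : ℂ) ≠ 0 := by exact_mod_cast hc₁pos.ne'
  rw [hd3, ofReal_re]
  -- `h = 1 / (a (z - x)) - 1 / (f z - f x)`, written so that it is visibly regular at `x`.
  set h : ℂ → ℂ := fun z => s z / (a * q z) with hh
  have hh_eq : ∀ z : ℂ, 0 < z.im → h z = 1 / (a * (z - x)) - 1 / (f z - f x) := by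
    intro z hz
    have hne : z ≠ x := sub_ne_zero.1 (hzx z hz)
    have e1 : q z = (f z - f x) / (z - x) := by rw [hq, dslope_of_ne _ hne, slope_def_field]
    have e2 : s z = (q z - a) / (z - x) := by
      rw [hs, dslope_of_ne _ hne, slope_def_field, hqx]
    have := hzx z hz
    have := hfzx z hz
    rw [hh]
    simp only [e2, e1]
    field_simp
  have hhd : DifferentiableOn ℂ h {z | 0 < z.im} := by
    refine DifferentiableOn.congr (f := fun z => 1 / (a * (z - x)) - 1 / (f z - f x)) ?_ hh_eq
    refine DifferentiableOn.sub ?_ ?_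
    · refine DifferentiableOn.div (by fun_prop) (by fun_prop) ?_
      intro z hz
      exact mul_ne_zero ha0 (hzx z hz)
    · refine DifferentiableOn.div (by fun_prop) (hd.sub_const _) ?_
      intro z hz
      exact hfzx z hz
  have hhim : ∀ z : ℂ, 0 < z.im → 0 ≤ (h z).im := by
    intro z hz
    have h1 := hjul z hz
    have h2 := normSq_pos.2 (hfzx z hz)
    have h3 := normSq_pos.2 (hzx z hz)
    have e : (h z).im = (f z).im / normSq (f z - f x) - z.im / (a * normSq (z - x)) := by
      rw [hh_eq z hz, sub_im, one_div, one_div, inv_im, inv_im, normSq_mul, normSq_ofReal]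
      simp [hfx]
      field_simp
      ring
    rw [e, sub_nonneg, div_le_div_iff₀ (by positivity) h2]
    rw [ha, ofReal_re] at h1
    linarith
  have hhx : h x = ((b / (a * a) : ℝ) : ℂ) := by
    rw [hh]; simp only [hqx, hb]; push_cast; rfl
  have hh1 : HasDerivAt h ((d / 6 * a - b ^ 2) / a ^ 3 : ℝ) (x : ℂ) := by
    have := hs1.div (hq1.const_mul (a : ℂ)) (by rw [hqx]; exact mul_ne_zero ha0 ha0)
    rw [hqx, hb, hd3] at this
    refine this.congr_deriv ?_
    push_cast
    field_simp
  have hhxim : (h x).im = 0 := by rw [hhx, ofReal_im]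
  have hnn := deriv_re_nonneg hhim hh1 hhxim
  rw [ofReal_re] at hnn
  have hnn' : b ^ 2 ≤ d / 6 * a := by
    rw [le_div_iff₀ (by positivity)] at hnn
    linarith
  by_contra hdneg
  have hda : d / 6 * a ≤ 0 := mul_nonpos_of_nonpos_of_nonneg (by linarith) hc₁pos.le
  have hb0 : b = 0 := by nlinarith
  have hd0 : d / 6 * a = 0 := by nlinarith
  -- Equality forces `h = 0` and `f` affine, against the bound on the real part.
  have hlin : ∀ z : ℂ, 0 < z.im → f z - f x = a * (z - x) := by
    intro z hz
    have h1 := julia hhd hhim hh1 hhxim hz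
    rw [ofReal_re, hd0, hhx, hb0] at h1
    simp at h1
    have h2 : h z = 0 := by
      by_contra hne
      have := mul_pos hz (normSq_pos.2 hne)
      linarith
    rw [hh_eq z hz, sub_eq_zero, one_div, one_div, inv_inj] at h2
    exact h2.symm
  have h1 := hlin (x + ((B - A + 1) / a : ℝ) + I) (by simp)
  have h2 := hlin (x + I) (by simp)
  have h3 := hbd (x + ((B - A + 1) / a : ℝ) + I) (by simp)
  have h4 := hbd (x + I) (by simp)
  have h5 : f (x + ((B - A + 1) / a : ℝ) + I) - f (x + I) = ((B - A + 1 : ℝ) : ℂ) := by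
    have : f (x + ((B - A + 1) / a : ℝ) + I) - f (x + I) = a * ((B - A + 1) / a : ℝ) := by
      linear_combination h1 - h2
    rw [this, ← ofReal_mul]
    congr 1
    field_simp
  have h6 := congrArg Complex.re h5
  rw [sub_re, ofReal_re] at h6
  linarith [h3.1, h3.2, h4.1, h4.2]

/-- **Positivity of `Θ'` and `Θ'''` inside the spectrum** (part of Lemma 2.1).
If `x` lies in the interior of `Σ = σ(H_V)` (with `(x-r, x+r) ⊆ Σ`), and `Θ̃` is an analytic
extension through `(x-r, x+r)` of the Marchenko–Ostrovski mapping, then `Θ̃'(x)` and `Θ̃'''(x)`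
are strictly positive real numbers. -/
theorem MO_first_and_third_derivative_pos
    (p : ℕ) (hp : 1 ≤ p) (V : ℤ → ℝ) (hV : ∀ n : ℤ, V (n + p) = V n)
    (H : lp (fun _ : ℤ => ℂ) 2 →L[ℂ] lp (fun _ : ℤ => ℂ) 2)
    (hH : ∀ ψ : lp (fun _ : ℤ => ℂ) 2, ∀ n : ℤ,
      (H ψ : ℤ → ℂ) n = ψ (n - 1) + ψ (n + 1) + (V n : ℂ) * ψ n)
    (x r : ℝ) (hr : 0 < r)
    (hspec : ∀ y : ℝ, y ∈ Set.Ioo (x - r) (x + r) → (y : ℂ) ∈ spectrum ℂ H)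
    (Θ : ℂ → ℂ)
    (hana : AnalyticOnNhd ℂ Θ ({z : ℂ | 0 < z.im} ∪ Metric.ball (x : ℂ) r))
    (hmaps : ∀ z : ℂ, 0 < z.im → 0 < (Θ z).im)
    (hre : ∀ z : ℂ, 0 < z.im → (Θ z).re ∈ Set.Icc (-Real.pi) 0)
    (hdisc : ∀ z : ℂ, 0 < z.im →
      2 * Complex.cos ((p : ℂ) * Θ z) = floquetDiscriminant p V z)
    (hreal : ∀ y : ℝ, y ∈ Set.Ioo (x - r) (x + r) → (Θ (y : ℂ)).im = 0) :
    (0 < (iteratedDeriv 1 Θ (x : ℂ)).re ∧ (iteratedDeriv 1 Θ (x : ℂ)).im = 0)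
    ∧ (0 < (iteratedDeriv 3 Θ (x : ℂ)).re ∧ (iteratedDeriv 3 Θ (x : ℂ)).im = 0) := by
  have hx : (x : ℂ) ∈ Metric.ball (x : ℂ) r := Metric.mem_ball_self hr
  refine herglotz_derivs (fun z hz => ?_) (hana _ (Or.inr hx)) hmaps ?_ hre
  · exact (hana z (Or.inl hz)).differentiableAt.differentiableWithinAt
  · filter_upwards [Ioo_mem_nhds (show x - r < x by linarith) (show x < x + r by linarith)]
      with y hy using hreal y hy
end

section
/- Let p ≥ 1 and let V : ℤ → ℝ be p-periodic. Let λ_m < λ_n be real numbers such that [λ_m, λ_n] is a connected component of Σ (that is, [λ_m, λ_n] ⊆ Σ and there is ε > 0 with ((λ_m − ε, λ_m) ∪ (λ_n, λ_n + ε)) ∩ Σ = ∅). Suppose Θ̃ : ℂ → ℂ is complex-analytic on ℂ₊ ∪ U for some open set U ⊆ ℂ containing the real interval (λ_m, λ_n), maps ℂ₊ into ℂ₊, satisfies Re Θ̃(z) ∈ [−π, 0] and 2 cos(p Θ̃(z)) = Δ(z) for all z ∈ ℂ₊, and takes real values on (λ_m, λ_n). Then the real-valued function x ↦ Θ̃''(x)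 on (λ_m, λ_n) tends to −∞ as x → λ_m from the right and tends to +∞ as x → λ_n from the left. -/
/-! The discriminant is (the complexification of) a real polynomial `D`. Two facts place the band
edges. First, `|D(y)| ≤ 2` implies `y ∈ σ(H)`: the monodromy matrix then has a unimodular
eigenvalue, and truncations of the corresponding Bloch solution contradict the existence of a
bounded inverse of `y - H` (`mem_spectrum_of_abs_discriminant_le`); hence `D² > 4` on the gaps next
to the band. Second, on the band `D = 2 cos (p Θ)` with `Θ` real, so `D² ≤ 4` there. Hence
`D = ±2` at both edges.

The edges are crossed transversally. Since `Θ` maps the upper half plane to itself,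
`D = 2 cos (p Θ)` has no zero off the real line, so the Laguerre inequality `D'² - D D'' > 0` holds
wherever `D ≠ 0`. If `D'` vanished at an edge, then `(D²)'' = 2 D D'' < 0` would make the edge a
local maximum of `D²`, contradicting `D² > 4` on the gap. So `D D' < 0` at the left edge and
`D D' > 0` at the right edge (`left_edge`, `right_edge`).

Finally `Θ' ≥ 0` on the band, again because `Θ` preserves the upper half plane, and two
differentiations of `D = 2 cos (p Θ)` give `p² (4 - D²) Θ'² = D'²` and
`D' Θ'' = Θ' (D'' + p² D Θ'²)`. At an edge the first relation forces `Θ' → +∞`, and then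
`Θ'' = Θ' (D''/D' + p² (D/D') Θ'²)` diverges with the sign of `D D'`
(`tendsto_second_derivative`). -/

open scoped ENNReal Topology

/-! ### The discriminant as a real polynomial -/

lemma monodromyMatrix_succ (k : ℕ) (V : ℤ → ℝ) (z : ℂ) :
    monodromyMatrix (k + 1) V z = transferMatrix V ((k : ℤ) + 1) z * monodromyMatrix k V z := by
  simp [monodromyMatrix, List.range_succ_eq_map, ← List.map_eq_flatMap, Function.comp_def]

lemma exists_discriminant_polynomial (p : ℕ) (V : ℤ → ℝ) :
    ∃ D : Polynomial ℝ, ∀ z : ℂ, floquetDiscriminant p V z = Polynomial.aeval z D := by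
  have key : ∃ M : Matrix (Fin 2) (Fin 2) (Polynomial ℝ), ∀ z : ℂ, ∀ i j,
      monodromyMatrix p V z i j = Polynomial.aeval z (M i j) := by
    induction p with
    | zero =>
      refine ⟨1, fun z i j => ?_⟩
      by_cases h : i = j <;> simp [monodromyMatrix, Matrix.one_apply, h]
    | succ k ih =>
      obtain ⟨M, hM⟩ := ih
      refine ⟨!![Polynomial.X - Polynomial.C (V ((k : ℤ) + 1)), -1; 1, 0] * M, fun z i j => ?_⟩
      rw [monodromyMatrix_succ]
      fin_cases i <;>
        simp [Matrix.mul_apply, Fin.sum_univ_two, transferMatrix, hM]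
  obtain ⟨M, hM⟩ := key
  exact ⟨M 0 0 + M 1 1, fun z => by simp [floquetDiscriminant, Matrix.trace_fin_two, hM]⟩

lemma det_monodromyMatrix (p : ℕ) (V : ℤ → ℝ) (z : ℂ) : (monodromyMatrix p V z).det = 1 := by
  induction p with
  | zero => simp [monodromyMatrix]
  | succ k ih =>
    rw [monodromyMatrix_succ, Matrix.det_mul, ih]
    simp [transferMatrix, Matrix.det_fin_two]

lemma aeval_ofReal_eq (D : Polynomial ℝ) (y : ℝ) :
    Polynomial.aeval (y : ℂ) D = ((D.eval y : ℝ) : ℂ) := by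
  have := Polynomial.aeval_algebraMap_apply ℂ y D
  simpa using this

/-! ### Bloch solutions and the spectrum -/

/-- When `|Δ(y)| ≤ 2` the monodromy matrix has an eigenvalue `μ` on the unit circle: if
`Δ(y) = 2 cos α`, then `μ = e^{iα}` solves the characteristic equation `μ² - Δ(y) μ + 1 = 0`. -/
lemma exists_unimodular_eigenvector (p : ℕ) (V : ℤ → ℝ) (z : ℂ) (d : ℝ) (hd : |d| ≤ 2)
    (h : floquetDiscriminant p V z = d) :
    ∃ μ : ℂ, ‖μ‖ = 1 ∧ ∃ v : Fin 2 → ℂ, v ≠ 0 ∧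
      (monodromyMatrix p V z).mulVec v = μ • v := by
  have hd' := abs_le.1 hd
  set α := Real.arccos (d / 2) with hα
  have hcos : Real.cos α = d / 2 := Real.cos_arccos (by linarith [hd'.1]) (by linarith [hd'.2])
  have hcosC : Complex.cos α = d / 2 := by rw [← Complex.ofReal_cos, hcos]; push_cast; rfl
  refine ⟨Complex.exp (α * Complex.I), Complex.norm_exp_ofReal_mul_I α, ?_⟩
  set μ := Complex.exp (α * Complex.I) with hμ
  have hchar : μ ^ 2 - d * μ + 1 = 0 := by
    have h1 : μ = Complex.cos α + Complex.sin α * Complex.I := Complex.exp_mul_I _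
    have h2 := Complex.sin_sq_add_cos_sq (α : ℂ)
    have h3 : (d : ℂ) = 2 * Complex.cos α := by rw [hcosC]; ring
    rw [h3, h1]
    linear_combination (-1 : ℂ) * h2 + Complex.sin α ^ 2 * Complex.I_sq
  have hdet := det_monodromyMatrix p V z
  have hz : (monodromyMatrix p V z - μ • (1 : Matrix (Fin 2) (Fin 2) ℂ)).det = 0 := by
    rw [Matrix.det_fin_two] at hdet ⊢
    simp only [floquetDiscriminant, Matrix.trace_fin_two] at h
    simp
    linear_combination hdet + hchar - μ * h
  obtain ⟨v, hv, hker⟩ := Matrix.exists_mulVec_eq_zero_iff.2 hz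
  refine ⟨v, hv, ?_⟩
  rw [Matrix.sub_mulVec, Matrix.smul_mulVec, Matrix.one_mulVec, sub_eq_zero] at hker
  exact hker

/-- A Bloch solution on the half-line: a solution of the eigenvalue equation that is multiplied
by a unimodular factor over one period. -/
lemma exists_bloch_solution (p : ℕ) (V : ℤ → ℝ) (hV : ∀ n : ℤ, V (n + p) = V n)
    (z : ℂ) (d : ℝ) (hd : |d| ≤ 2) (h : floquetDiscriminant p V z = d) :
    ∃ u : ℕ → ℂ, (∀ n : ℕ, u (n + 2) = (z - V ((n : ℤ) + 1)) * u (n + 1) - u n) ∧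
      (∀ n, ‖u (n + p)‖ = ‖u n‖) ∧ (u 0 ≠ 0 ∨ u 1 ≠ 0) := by
  obtain ⟨μ, hμ, v, hv, hmv⟩ := exists_unimodular_eigenvector p V z d hd h
  set w : ℕ → Fin 2 → ℂ := fun n => (monodromyMatrix n V z).mulVec v with hw
  have hw0 : w 0 = v := by
    simp only [hw, monodromyMatrix]
    exact Matrix.one_mulVec v
  have hws : ∀ n, w (n + 1) = (transferMatrix V ((n : ℤ) + 1) z).mulVec (w n) := by
    intro n
    simp only [hw, monodromyMatrix_succ, Matrix.mulVec_mulVec]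
  have hs0 : ∀ n, w (n + 1) 0 = (z - V ((n : ℤ) + 1)) * w n 0 - w n 1 := by
    intro n
    rw [hws]; simp [transferMatrix, Matrix.mulVec, dotProduct, Fin.sum_univ_two]; ring
  have hs1 : ∀ n, w (n + 1) 1 = w n 0 := by
    intro n
    rw [hws]; simp [transferMatrix, Matrix.mulVec, dotProduct, Fin.sum_univ_two]
  have hper : ∀ n, w (n + p) = μ • w n := by
    intro n
    induction n with
    | zero => rw [zero_add, hw0]; exact hmv
    | succ n ih =>
      have hT : transferMatrix V (((n + p : ℕ) : ℤ) + 1) z = transferMatrix V ((n : ℤ) + 1) z := by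
        have : ((n + p : ℕ) : ℤ) + 1 = ((n : ℤ) + 1) + p := by push_cast; ring
        simp only [transferMatrix, this, hV]
      rw [show n + 1 + p = (n + p) + 1 by ring, hws, hT, ih, Matrix.mulVec_smul, ← hws]
  refine ⟨fun n => w n 1, fun n => ?_, fun n => ?_, ?_⟩
  · show w (n + 2) 1 = _
    rw [hs1, hs0, ← hs1]
  · show ‖w (n + p) 1‖ = ‖w n 1‖
    rw [hper]; simp [hμ]
  · show w 0 1 ≠ 0 ∨ w 1 1 ≠ 0
    rw [show w 1 1 = w 0 0 from hs1 0, hw0]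
    by_contra hcon
    push Not at hcon
    exact hv (by ext i; fin_cases i <;> simp [hcon.1, hcon.2])

/-- Applying `z - H` to the truncation of a solution of the eigenvalue equation to the sites
`1, …, M` leaves only boundary terms. Here `e k` embeds the scalars as vectors supported at the
site `k`. -/
lemma sub_apply_truncation {E : Type*} [AddCommGroup E] [Module ℂ E] (H : E →ₗ[ℂ] E)
    (e : ℤ → ℂ →ₗ[ℂ] E) (V : ℤ → ℝ) (z : ℂ) (u : ℕ → ℂ)
    (hHe : ∀ k a, H (e k a) = e (k - 1) a + e (k + 1) a + e k (V k * a))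
    (hrec : ∀ n : ℕ, u (n + 2) = (z - V ((n : ℤ) + 1)) * u (n + 1) - u n) (M : ℕ) :
    z • (∑ j ∈ Finset.range M, e ((j : ℤ) + 1) (u (j + 1)))
        - H (∑ j ∈ Finset.range M, e ((j : ℤ) + 1) (u (j + 1))) =
      - e 0 (u 1) + e 1 (u 0) - e ((M : ℤ) + 1) (u M) + e M (u (M + 1)) := by
  induction M with
  | zero => simp
  | succ M ih =>
    rw [Finset.sum_range_succ, smul_add, map_add, add_sub_add_comm, ih, hHe]
    have hz : z • e ((M : ℤ) + 1) (u (M + 1)) = e ((M : ℤ) + 1) (z * u (M + 1)) := by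
      rw [← smul_eq_mul, map_smul]
    rw [show M + 1 + 1 = M + 2 from rfl, hrec M, sub_mul, map_sub, map_sub, hz]
    push_cast
    rw [show (M : ℤ) + 1 - 1 = M by ring]
    abel

/-- Truncations of a Bloch solution form a Weyl sequence, so the set `{|Δ| ≤ 2}` lies in the
spectrum. -/
lemma mem_spectrum_of_abs_discriminant_le
    (p : ℕ) (hp : 1 ≤ p) (V : ℤ → ℝ) (hV : ∀ n : ℤ, V (n + p) = V n)
    (H : lp (fun _ : ℤ => ℂ) 2 →L[ℂ] lp (fun _ : ℤ => ℂ) 2)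
    (hH : ∀ ψ : lp (fun _ : ℤ => ℂ) 2, ∀ n : ℤ,
      (H ψ : ℤ → ℂ) n = ψ (n - 1) + ψ (n + 1) + (V n : ℂ) * ψ n)
    (z : ℂ) (d : ℝ) (hd : |d| ≤ 2) (h : floquetDiscriminant p V z = d) :
    z ∈ spectrum ℂ H := by
  obtain ⟨u, hrec, hper, hne⟩ := exists_bloch_solution p V hV z d hd h
  by_contra hz
  obtain ⟨B, hB⟩ := (spectrum.notMem_iff.1 hz).exists_left_inv
  have hBH : ∀ ψ, B (z • ψ - H ψ) = ψ := fun ψ => DFunLike.congr_fun hB ψ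
  obtain ⟨e, he⟩ : ∃ e : ℤ → ℂ →ₗ[ℂ] lp (fun _ : ℤ => ℂ) 2, ∀ k a, e k a = lp.single 2 k a :=
    ⟨fun k => (lp.singleContinuousLinearMap ℂ (fun _ : ℤ => ℂ) 2 k : ℂ →ₗ[ℂ] _), fun _ _ => rfl⟩
  have hHe : ∀ k a, H (e k a) = e (k - 1) a + e (k + 1) a + e k (V k * a) := by
    intro k a
    ext n
    rw [hH]
    simp only [he, lp.coeFn_add, Pi.add_apply, lp.single_apply, Pi.single_apply]
    have e1 : n - 1 = k ↔ n = k + 1 := by omega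
    have e2 : n + 1 = k ↔ n = k - 1 := by omega
    simp only [e1, e2, mul_ite, mul_zero]
    by_cases hnk : n = k
    · subst hnk; simp
    · simp only [hnk, if_false]; ring
  have hen : ∀ k a, ‖e k a‖ = ‖a‖ := fun k a => by
    rw [he]; exact lp.norm_single (E := fun _ : ℤ => ℂ) (p := 2) (by norm_num) k a
  have hnorm : ∀ M, ‖∑ j ∈ Finset.range M, e ((j : ℤ) + 1) (u (j + 1))‖ ^ 2
      = ∑ j ∈ Finset.range M, ‖u (j + 1)‖ ^ 2 := by
    intro M
    obtain ⟨ι, hι⟩ : ∃ ι : ℕ ↪ ℤ, ∀ j : ℕ, ι j = (j : ℤ) + 1 :=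
      ⟨⟨fun j => (j : ℤ) + 1, fun a b hab => by simpa using hab⟩, fun _ => rfl⟩
    have := lp.norm_sum_single (E := fun _ : ℤ => ℂ) (p := 2) (by norm_num)
      (fun k : ℤ => u k.toNat) ((Finset.range M).map ι)
    rw [Finset.sum_map, Finset.sum_map] at this
    have h2 : ∀ j : ℕ, ((j : ℤ) + 1).toNat = j + 1 := fun j => by omega
    simpa [hι, h2, he] using this
  have htel := sub_apply_truncation (H : _ →ₗ[ℂ] _) e V z u hHe hrec
  set ψ : ℕ → lp (fun _ : ℤ => ℂ) 2 :=
    fun M => ∑ j ∈ Finset.range M, e ((j : ℤ) + 1) (u (j + 1)) with hψ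
  have hperN : ∀ N n, ‖u (n + N * p)‖ = ‖u n‖ := by
    intro N n
    induction N with
    | zero => simp
    | succ N ih => rw [Nat.succ_mul, ← add_assoc, hper, ih]
  -- boundedness of the inverse `B` bounds all truncations, since the boundary terms are bounded
  have hup : ∀ N, ‖ψ (N * p)‖ ≤ ‖B‖ * (2 * (‖u 0‖ + ‖u 1‖)) := by
    intro N
    rw [← hBH (ψ (N * p))]
    refine (B.le_opNorm _).trans (mul_le_mul_of_nonneg_left ?_ (norm_nonneg _))
    refine (congrArg norm (htel (N * p))).trans_le ?_
    have h0 := hperN N 0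
    have h1 := hperN N 1
    rw [zero_add] at h0
    rw [add_comm] at h1
    refine (norm_add_le _ _).trans ?_
    refine (add_le_add_left (norm_sub_le _ _) _).trans ?_
    refine (add_le_add_left (add_le_add_left (norm_add_le _ _) _) _).trans ?_
    rw [norm_neg, hen, hen, hen, hen, h0, h1]
    linarith
  set S := ∑ j ∈ Finset.range p, ‖u (j + 1)‖ ^ 2 with hS
  have hlow : ∀ N : ℕ, ∑ j ∈ Finset.range (N * p), ‖u (j + 1)‖ ^ 2 = N * S := by
    intro N
    induction N with
    | zero => simp
    | succ N ih =>
      rw [Nat.succ_mul, Finset.sum_range_add, ih]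
      have : ∀ j, ‖u (N * p + j + 1)‖ = ‖u (j + 1)‖ := fun j => by
        rw [show N * p + j + 1 = (j + 1) + N * p by ring, hperN]
      simp only [this]
      push_cast; ring
  have hSpos : 0 < S := by
    refine lt_of_le_of_ne (Finset.sum_nonneg fun _ _ => by positivity) fun h0 => ?_
    have hall := (Finset.sum_eq_zero_iff_of_nonneg (fun _ _ => by positivity)).1 h0.symm
    have hu : ∀ j < p, u (j + 1) = 0 := fun j hj => by
      simpa using hall j (Finset.mem_range.2 hj)
    rcases hne with h' | h'
    · have h1 := hu (p - 1) (by omega)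
      rw [Nat.sub_add_cancel hp] at h1
      have h2 := hper 0
      rw [zero_add, h1, norm_zero] at h2
      exact h' (norm_eq_zero.1 h2.symm)
    · exact h' (hu 0 hp)
  obtain ⟨N, hN⟩ := exists_nat_gt ((‖B‖ * (2 * (‖u 0‖ + ‖u 1‖))) ^ 2 / S)
  have h3 := pow_le_pow_left₀ (norm_nonneg _) (hup N) 2
  rw [hnorm, hlow] at h3
  rw [div_lt_iff₀ hSpos] at hN
  linarith

/-! ### Band edges of a real-rooted discriminant -/

/-- The Laguerre inequality `P'² - P P'' ≥ 0` for a product of real linear factors, strict away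
from the roots. It rests on the identity `L((X - r) P) = P² + (X - r)² L(P)` for
`L(P) = P'² - P P''`. -/
lemma laguerre_prod (m : Multiset ℝ) (x : ℝ) (P : Polynomial ℝ)
    (hP : P = (m.map fun a => Polynomial.X - Polynomial.C a).prod) :
    0 ≤ P.derivative.eval x ^ 2 - P.eval x * P.derivative.derivative.eval x ∧
    (m ≠ 0 → P.eval x ≠ 0 →
      0 < P.derivative.eval x ^ 2 - P.eval x * P.derivative.derivative.eval x) := by
  induction m using Multiset.induction_on generalizing P with
  | empty => subst hP; simp
  | cons r m ih =>
    obtain ⟨h0, -⟩ := ih _ rfl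
    rw [Multiset.map_cons, Multiset.prod_cons] at hP
    set Q := (m.map fun a => Polynomial.X - Polynomial.C a).prod
    have key : P.derivative.eval x ^ 2 - P.eval x * P.derivative.derivative.eval x
        = Q.eval x ^ 2 + (x - r) ^ 2 *
          (Q.derivative.eval x ^ 2 - Q.eval x * Q.derivative.derivative.eval x) := by
      subst hP; simp; ring
    rw [key]
    refine ⟨by positivity, fun _ hne => ?_⟩
    have hQ : Q.eval x ≠ 0 := by
      rintro h; apply hne; rw [hP, Polynomial.eval_mul, h, mul_zero]
    positivity

/-- The Laguerre inequality at a critical point: a non-constant real polynomial with only real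
zeros has `D D'' < 0` at every critical point that is not a zero. -/
lemma mul_second_derivative_neg (D : Polynomial ℝ)
    (hroots : ∀ z : ℂ, Polynomial.aeval z D = 0 → z.im = 0) (hdeg : D.natDegree ≠ 0)
    (a : ℝ) (ha : D.eval a ≠ 0) (hd : D.derivative.eval a = 0) :
    D.eval a * D.derivative.derivative.eval a < 0 := by
  have hD0 : D ≠ 0 := by rintro rfl; simp at hdeg
  have hsplit : D.Splits := by
    refine Polynomial.Splits.of_splits_map (algebraMap ℝ ℂ) (IsAlgClosed.splits _) ?_
    intro z hz
    have hz' : Polynomial.aeval z D = 0 := by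
      have := (Polynomial.mem_roots'.1 hz).2
      rwa [Polynomial.IsRoot.def, Polynomial.eval_map_algebraMap] at this
    exact ⟨z.re, Complex.ext (by simp) (by simp [hroots z hz'])⟩
  have hprod := hsplit.eq_prod_roots
  set Q := (D.roots.map fun a => Polynomial.X - Polynomial.C a).prod with hQ
  set c := D.leadingCoeff with hc
  have hL := (laguerre_prod D.roots a Q hQ).2 (hsplit.roots_ne_zero hdeg) (by
    intro h; apply ha; rw [hprod, Polynomial.eval_mul, h, mul_zero])
  have hc0 : c ≠ 0 := by simpa [hc] using hD0
  have e0 : D.eval a = c * Q.eval a := by rw [hprod]; simp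
  have e1 : D.derivative.eval a = c * Q.derivative.eval a := by rw [hprod]; simp
  have e2 : D.derivative.derivative.eval a = c * Q.derivative.derivative.eval a := by
    rw [hprod]; simp
  have hQ1 : Q.derivative.eval a = 0 := by
    rw [hd] at e1
    exact (mul_eq_zero.1 e1.symm).resolve_left hc0
  rw [hQ1] at hL
  rw [e0, e2]
  have : 0 < c ^ 2 := by positivity
  nlinarith

/-- At a left band edge `a` the discriminant satisfies `D(a) = ±2` and crosses this value
transversally. A critical point would be a local maximum of `D²` by the Laguerre inequality,
which is incompatible with `D² > 4` on the gap. -/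
lemma left_edge (D : Polynomial ℝ)
    (hroots : ∀ z : ℂ, Polynomial.aeval z D = 0 → z.im = 0) (a b c : ℝ) (hba : b < a) (hac : a < c)
    (hin : ∀ y ∈ Set.Ioo a c, D.eval y ^ 2 ≤ 4) (hout : ∀ y ∈ Set.Ioo b a, 4 < D.eval y ^ 2) :
    D.eval a ^ 2 = 4 ∧ D.eval a * D.derivative.eval a < 0 := by
  have hcont : ContinuousAt (fun y => (D ^ 2).eval y) a := (D ^ 2).continuous.continuousAt
  have hr : ∀ᶠ y in 𝓝[>] a, y ∈ Set.Ioo a c := Ioo_mem_nhdsGT hac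
  have hl : ∀ᶠ y in 𝓝[<] a, y ∈ Set.Ioo b a := Ioo_mem_nhdsLT hba
  have hle : (D ^ 2).eval a ≤ 4 := by
    refine le_of_tendsto (hcont.tendsto.mono_left (nhdsWithin_le_nhds (s := Set.Ioi a))) ?_
    filter_upwards [hr] with y hy
    simpa using hin y hy
  have hge : 4 ≤ (D ^ 2).eval a := by
    refine ge_of_tendsto (hcont.tendsto.mono_left (nhdsWithin_le_nhds (s := Set.Iio a))) ?_
    filter_upwards [hl] with y hy
    simpa using (hout y hy).le
  have h4 : (D ^ 2).eval a = 4 := le_antisymm hle hge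
  have h4' : D.eval a ^ 2 = 4 := by simpa using h4
  refine ⟨h4', ?_⟩
  have hda : D.eval a ≠ 0 := by intro h; rw [h] at h4'; norm_num at h4'
  have hder : ∀ x,
      HasDerivAt (fun y => (D ^ 2).eval y) (2 * (D.eval x * D.derivative.eval x)) x := by
    intro x
    have he : (D ^ 2).derivative.eval x = 2 * (D.eval x * D.derivative.eval x) := by
      simp [Polynomial.derivative_pow, mul_assoc]
    exact he ▸ (D ^ 2).hasDerivAt x
  have hdeg : D.natDegree ≠ 0 := by
    intro h
    obtain ⟨r, rfl⟩ := Polynomial.natDegree_eq_zero.1 h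
    have := hout ((a + b) / 2) ⟨by linarith, by linarith⟩
    rw [Polynomial.eval_C] at this h4'
    linarith
  refine lt_of_le_of_ne ?_ fun h0 => ?_
  · have hs := (hasDerivAt_iff_tendsto_slope.1 (hder a)).mono_left
      (nhdsWithin_mono a (s := Set.Ioi a) fun y hy => ne_of_gt hy)
    have : 2 * (D.eval a * D.derivative.eval a) ≤ 0 := by
      refine le_of_tendsto hs ?_
      filter_upwards [hr] with y hy
      rw [slope_def_field]
      refine div_nonpos_of_nonpos_of_nonneg ?_ (by linarith [hy.1])
      have := hin y hy
      rw [h4]; simp only [Polynomial.eval_pow]; linarith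
    linarith
  · have hd1 : D.derivative.eval a = 0 := (mul_eq_zero.1 h0).resolve_left hda
    have hneg := mul_second_derivative_neg D hroots hdeg a hda hd1
    have hdf : deriv (fun y => (D ^ 2).eval y) =
        fun x => 2 * (D.eval x * D.derivative.eval x) := funext fun x => (hder x).deriv
    have hmax : IsLocalMax (fun y => (D ^ 2).eval y) a := by
      refine isLocalMax_of_deriv_deriv_neg ?_ (by rw [hdf]; simp [hd1]) hcont
      rw [hdf]
      have := (((D.hasDerivAt a).mul (D.derivative.hasDerivAt a)).const_mul 2).deriv
      refine lt_of_eq_of_lt this ?_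
      rw [hd1]; linarith
    have hmax' : ∀ᶠ y in 𝓝[<] a, (D ^ 2).eval y ≤ (D ^ 2).eval a :=
      nhdsWithin_le_nhds hmax
    obtain ⟨y, hy1, hy2⟩ := (hmax'.and hl).exists
    have := hout y hy2
    rw [h4] at hy1
    simp only [Polynomial.eval_pow] at hy1
    linarith

/-- The mirror image of `left_edge`, obtained from it by the reflection `x ↦ -x`. -/
lemma right_edge (D : Polynomial ℝ)
    (hroots : ∀ z : ℂ, Polynomial.aeval z D = 0 → z.im = 0) (a b c : ℝ) (hba : b < a) (hac : a < c)
    (hin : ∀ y ∈ Set.Ioo b a, D.eval y ^ 2 ≤ 4) (hout : ∀ y ∈ Set.Ioo a c, 4 < D.eval y ^ 2) :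
    D.eval a ^ 2 = 4 ∧ 0 < D.eval a * D.derivative.eval a := by
  have := left_edge (D.comp (-Polynomial.X))
    (fun z hz => by
      have := hroots (-z) (by simpa [Polynomial.aeval_comp] using hz)
      simpa using this)
    (-a) (-c) (-b) (by linarith) (by linarith)
    (fun y hy => by simpa using hin (-y) ⟨by linarith [hy.2], by linarith [hy.1]⟩)
    (fun y hy => by simpa using hout (-y) ⟨by linarith [hy.2], by linarith [hy.1]⟩)
  simpa [Polynomial.derivative_comp] using this

/-! ### Asymptotics of the second derivative -/

/-- The first two derivatives `D₁ = -2 p sin(pθ) t₁` and `D₂ = -2 p² cos(pθ) t₁² - 2 p sin(pθ) t₂`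
of the relation `D = 2 cos(pθ)` give the two algebraic relations below; when `D → ±2` and `D₁`
has a non-zero limit they force `t₁ → +∞`, and `t₂` diverges with the sign of `D D₁`. -/
lemma tendsto_second_derivative {l : Filter ℝ} (p : ℝ) (hp : 0 < p) (t₁ t₂ D D₁ D₂ : ℝ → ℝ)
    (d d₁ d₂ : ℝ) (hD : Filter.Tendsto D l (𝓝 d)) (hD₁ : Filter.Tendsto D₁ l (𝓝 d₁))
    (hD₂ : Filter.Tendsto D₂ l (𝓝 d₂)) (hd : d ^ 2 = 4) (hd₁ : d₁ ≠ 0)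
    (hn : ∀ᶠ x in l, 0 ≤ t₁ x)
    (h1 : ∀ᶠ x in l, p ^ 2 * (4 - D x ^ 2) * t₁ x ^ 2 = D₁ x ^ 2)
    (h2 : ∀ᶠ x in l, D₁ x * t₂ x = t₁ x * (D₂ x + p ^ 2 * D x * t₁ x ^ 2)) :
    (d * d₁ < 0 → Filter.Tendsto t₂ l Filter.atBot) ∧
    (0 < d * d₁ → Filter.Tendsto t₂ l Filter.atTop) := by
  have hne : ∀ᶠ x in l, D₁ x ≠ 0 := hD₁.eventually_ne hd₁
  have hpos : ∀ᶠ x in l, 0 < p ^ 2 * (4 - D x ^ 2) := by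
    filter_upwards [hne, h1] with x hx h1
    have h3 : 0 < D₁ x ^ 2 := by positivity
    rw [← h1] at h3
    exact pos_of_mul_pos_left h3 (sq_nonneg _)
  have hzero : Filter.Tendsto (fun x => p ^ 2 * (4 - D x ^ 2)) l (𝓝[>] 0) := by
    refine tendsto_nhdsWithin_iff.2 ⟨?_, hpos⟩
    have := ((hD.pow 2).const_sub 4).const_mul (p ^ 2)
    rwa [hd, sub_self, mul_zero] at this
  have hsq : Filter.Tendsto (fun x => t₁ x ^ 2) l Filter.atTop := by
    have h3 : 0 < d₁ ^ 2 := by positivity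
    refine ((hD₁.pow 2).pos_mul_atTop h3 hzero.inv_tendsto_nhdsGT_zero).congr' ?_
    filter_upwards [h1, hpos] with x h1 hx
    rw [← h1]
    simp only [Pi.inv_apply]
    rw [mul_comm, inv_mul_cancel_left₀ hx.ne']
  have ht₁ : Filter.Tendsto t₁ l Filter.atTop := by
    refine (Real.tendsto_sqrt_atTop.comp hsq).congr' ?_
    filter_upwards [hn] with x hx
    exact Real.sqrt_sq hx
  have hform : (fun x => t₁ x * (D₂ x / D₁ x + p ^ 2 * (D x / D₁ x) * t₁ x ^ 2)) =ᶠ[l] t₂ := by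
    filter_upwards [h2, hne] with x h2 hx
    field_simp
    linarith
  have hlim : Filter.Tendsto (fun x => p ^ 2 * (D x / D₁ x)) l (𝓝 (p ^ 2 * (d / d₁))) :=
    (hD.div hD₁ hd₁).const_mul _
  have hlim₂ : Filter.Tendsto (fun x => D₂ x / D₁ x) l (𝓝 (d₂ / d₁)) := hD₂.div hD₁ hd₁
  have hquot : d / d₁ = d * d₁ / d₁ ^ 2 := by field_simp
  have hd₁sq : 0 < d₁ ^ 2 := by positivity
  refine ⟨fun hneg => ?_, fun hpo => ?_⟩
  · have h3 : p ^ 2 * (d / d₁) < 0 := by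
      rw [hquot]; exact mul_neg_of_pos_of_neg (by positivity) (div_neg_of_neg_of_pos hneg hd₁sq)
    exact (ht₁.atTop_mul_atBot₀ (hlim₂.add_atBot (hlim.neg_mul_atTop h3 hsq))).congr' hform
  · have h3 : 0 < p ^ 2 * (d / d₁) := by
      rw [hquot]; exact mul_pos (by positivity) (div_pos hpo hd₁sq)
    exact (ht₁.atTop_mul_atTop₀ (hlim₂.add_atTop (hlim.pos_mul_atTop h3 hsq))).congr' hform

/-! ### The mapping on the band -/

lemma im_eq_zero_of_cos_eq_zero (w : ℂ) (h : Complex.cos w = 0) : w.im = 0 := by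
  obtain ⟨k, hk⟩ := Complex.cos_eq_zero_iff.1 h
  have : w = (((2 * k + 1) * Real.pi / 2 : ℝ) : ℂ) := by rw [hk]; push_cast; rfl
  rw [this]; exact Complex.ofReal_im _

/-- The discriminant has only real zeros: a zero in the upper half plane would make `p Θ` a zero
of the cosine, hence real, and complex conjugation handles the lower half plane. -/
lemma discriminant_roots_real (p : ℕ) (hp : 1 ≤ p) (D : Polynomial ℝ) (Θ : ℂ → ℂ)
    (hmaps : ∀ z : ℂ, 0 < z.im → 0 < (Θ z).im)
    (hdisc : ∀ z : ℂ, 0 < z.im → 2 * Complex.cos ((p : ℂ) * Θ z) = Polynomial.aeval z D)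
    (z : ℂ) (hz : Polynomial.aeval z D = 0) : z.im = 0 := by
  have upper : ∀ z : ℂ, 0 < z.im → Polynomial.aeval z D ≠ 0 := by
    intro z hz h0
    rw [← hdisc z hz] at h0
    have h1 := im_eq_zero_of_cos_eq_zero _ ((mul_eq_zero.1 h0).resolve_left two_ne_zero)
    have h2 := hmaps z hz
    have h3 : (0 : ℝ) < p := by exact_mod_cast hp
    simp at h1
    rcases h1 with h1 | h1
    · omega
    · exact h2.ne' h1
  rcases lt_trichotomy z.im 0 with h | h | h
  · refine absurd ?_ (upper (starRingEnd ℂ z) (by simpa using h))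
    rw [Polynomial.aeval_conj, hz, map_zero]
  · exact h
  · exact absurd hz (upper z h)

/-- A complex derivative at a real point of a function that is real on the reals nearby is
real. -/
lemma im_deriv_eq_zero (f : ℂ → ℂ) (f' : ℂ) (y : ℝ) (hf : HasDerivAt f f' y)
    (hr : ∀ᶠ x : ℝ in 𝓝 y, (f x).im = 0) : f'.im = 0 := by
  have h1 : HasDerivAt (fun x : ℝ => (f x).im) f'.im y :=
    Complex.imCLM.hasFDerivAt.comp_hasDerivAt y hf.comp_ofReal
  exact h1.unique ((hasDerivAt_const y (0 : ℝ)).congr_of_eventuallyEq hr)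

/-- A holomorphic map sending the upper half plane to itself and a real point to a real point
has non-negative derivative there: move up from `y` along the imaginary direction. -/
lemma re_deriv_nonneg (f : ℂ → ℂ) (f' : ℂ) (y : ℝ) (hf : HasDerivAt f f' y)
    (hmaps : ∀ z : ℂ, 0 < z.im → 0 < (f z).im) (hy : (f y).im = 0) : 0 ≤ f'.re := by
  have hg : HasDerivAt (fun t : ℝ => (y : ℂ) + t * Complex.I) Complex.I 0 := by
    simpa using ((hasDerivAt_id (0 : ℝ)).ofReal_comp.mul_const Complex.I).const_add (y : ℂ)
  have hf0 : HasDerivAt f f' ((y : ℂ) + ((0 : ℝ) : ℂ) * Complex.I) := by simpa using hf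
  have h1 : HasDerivAt (fun t : ℝ => (f ((y : ℂ) + t * Complex.I)).im) (f' * Complex.I).im 0 :=
    Complex.imCLM.hasFDerivAt.comp_hasDerivAt (0 : ℝ) (hf0.comp (0 : ℝ) hg)
  have h2 := (hasDerivAt_iff_tendsto_slope.1 h1).mono_left
    (nhdsWithin_mono 0 (s := Set.Ioi 0) fun y hy => ne_of_gt hy)
  have h3 : 0 ≤ (f' * Complex.I).im := by
    refine ge_of_tendsto h2 ?_
    filter_upwards [self_mem_nhdsWithin] with t ht
    have ht' : (0 : ℝ) < t := ht
    rw [slope_def_field]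
    have := hmaps ((y : ℂ) + t * Complex.I) (by simpa using ht')
    simp only [Complex.ofReal_zero, zero_mul, add_zero, hy, sub_zero]
    positivity
  simpa using h3

/-- The relation `2 cos (p Θ) = Δ` passes to real boundary points by continuity. -/
lemma boundary_relation (p : ℕ) (D : Polynomial ℝ) (Θ : ℂ → ℂ) (y : ℝ)
    (hc : ContinuousAt Θ y)
    (hdisc : ∀ z : ℂ, 0 < z.im → 2 * Complex.cos ((p : ℂ) * Θ z) = Polynomial.aeval z D) :
    2 * Complex.cos ((p : ℂ) * Θ y) = Polynomial.aeval (y : ℂ) D := by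
  have hpath : Filter.Tendsto (fun t : ℝ => (y : ℂ) + t * Complex.I) (𝓝[>] 0) (𝓝 (y : ℂ)) := by
    have : Continuous (fun t : ℝ => (y : ℂ) + t * Complex.I) := by fun_prop
    simpa using (this.tendsto 0).mono_left nhdsWithin_le_nhds
  have hL : ContinuousAt (fun z => 2 * Complex.cos ((p : ℂ) * Θ z)) (y : ℂ) := by fun_prop
  have hR : ContinuousAt (fun z : ℂ => Polynomial.aeval z D) (y : ℂ) :=
    (Polynomial.continuous_aeval D).continuousAt
  refine tendsto_nhds_unique ((hL.tendsto.comp hpath)) ((hR.tendsto.comp hpath).congr' ?_)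
  filter_upwards [self_mem_nhdsWithin] with t ht
  have ht' : (0 : ℝ) < t := ht
  exact (hdisc _ (by simpa using ht')).symm

/-- **Band-edge behavior of `Θ''`** (part of Lemma 2.1).
If `[λm, λn]` is a connected component of `Σ = σ(H_V)` and `Θ̃` is an analytic extension of
the Marchenko–Ostrovski mapping through `(λm, λn)`, real on `(λm, λn)`, then `Θ̃'' → -∞`
at the left edge and `Θ̃'' → +∞` at the right edge. -/
theorem MO_second_derivative_band_edges
    (p : ℕ) (hp : 1 ≤ p) (V : ℤ → ℝ) (hV : ∀ n : ℤ, V (n + p) = V n)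
    (H : lp (fun _ : ℤ => ℂ) 2 →L[ℂ] lp (fun _ : ℤ => ℂ) 2)
    (hH : ∀ ψ : lp (fun _ : ℤ => ℂ) 2, ∀ n : ℤ,
      (H ψ : ℤ → ℂ) n = ψ (n - 1) + ψ (n + 1) + (V n : ℂ) * ψ n)
    (lm ln : ℝ) (hlt : lm < ln)
    (hsub : ∀ y : ℝ, y ∈ Set.Icc lm ln → (y : ℂ) ∈ spectrum ℂ H)
    (hgap : ∃ ε > 0, ∀ y : ℝ,
      y ∈ Set.Ioo (lm - ε) lm ∪ Set.Ioo ln (ln + ε) → (y : ℂ) ∉ spectrum ℂ H)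
    (U : Set ℂ) (hU : IsOpen U) (hUsub : ∀ y : ℝ, y ∈ Set.Ioo lm ln → (y : ℂ) ∈ U)
    (Θ : ℂ → ℂ)
    (hana : AnalyticOnNhd ℂ Θ ({z : ℂ | 0 < z.im} ∪ U))
    (hmaps : ∀ z : ℂ, 0 < z.im → 0 < (Θ z).im)
    (hre : ∀ z : ℂ, 0 < z.im → (Θ z).re ∈ Set.Icc (-Real.pi) 0)
    (hdisc : ∀ z : ℂ, 0 < z.im →
      2 * Complex.cos ((p : ℂ) * Θ z) = floquetDiscriminant p V z)
    (hreal : ∀ y : ℝ, y ∈ Set.Ioo lm ln → (Θ (y : ℂ)).im = 0) :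
    (∀ y : ℝ, y ∈ Set.Ioo lm ln → (iteratedDeriv 2 Θ (y : ℂ)).im = 0)
    ∧ Filter.Tendsto (fun y : ℝ => (iteratedDeriv 2 Θ (y : ℂ)).re) (𝓝[>] lm) Filter.atBot
    ∧ Filter.Tendsto (fun y : ℝ => (iteratedDeriv 2 Θ (y : ℂ)).re) (𝓝[<] ln) Filter.atTop := by
  obtain ⟨D, hΔ⟩ := exists_discriminant_polynomial p V
  have hdisc' : ∀ z : ℂ, 0 < z.im →
      2 * Complex.cos ((p : ℂ) * Θ z) = Polynomial.aeval z D := fun z hz => by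
    rw [hdisc z hz, hΔ]
  have hroots := discriminant_roots_real p hp D Θ hmaps hdisc'
  have hpR : (0 : ℝ) < p := by exact_mod_cast hp
  have hit : iteratedDeriv 2 Θ = deriv (deriv Θ) := by
    rw [iteratedDeriv_succ, iteratedDeriv_one]
  rw [hit]
  have hnhds : ∀ y ∈ Set.Ioo lm ln, ∀ᶠ x : ℝ in 𝓝 y, x ∈ Set.Ioo lm ln :=
    fun y hy => isOpen_Ioo.mem_nhds hy
  have han : ∀ y ∈ Set.Ioo lm ln, AnalyticAt ℂ Θ (y : ℂ) :=
    fun y hy => hana _ (Or.inr (hUsub y hy))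
  have hd1 : ∀ y ∈ Set.Ioo lm ln, HasDerivAt Θ (deriv Θ y) (y : ℂ) :=
    fun y hy => (han y hy).differentiableAt.hasDerivAt
  have hd2 : ∀ y ∈ Set.Ioo lm ln, HasDerivAt (deriv Θ) (deriv (deriv Θ) y) (y : ℂ) :=
    fun y hy => (han y hy).deriv.differentiableAt.hasDerivAt
  have him1 : ∀ y ∈ Set.Ioo lm ln, (deriv Θ y).im = 0 := fun y hy =>
    im_deriv_eq_zero Θ _ y (hd1 y hy) ((hnhds y hy).mono fun x hx => hreal x hx)
  have him2 : ∀ y ∈ Set.Ioo lm ln, (deriv (deriv Θ) y).im = 0 := fun y hy =>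
    im_deriv_eq_zero (deriv Θ) _ y (hd2 y hy) ((hnhds y hy).mono fun x hx => him1 x hx)
  have hnonneg : ∀ y ∈ Set.Ioo lm ln, 0 ≤ (deriv Θ y).re := fun y hy =>
    re_deriv_nonneg Θ _ y (hd1 y hy) hmaps (hreal y hy)
  -- `θ` is the restriction of `Θ` to the band, with derivatives `t₁` and `t₂`
  set θ : ℝ → ℝ := fun x => (Θ x).re with hθ
  set t₁ : ℝ → ℝ := fun x => (deriv Θ x).re with ht₁
  set t₂ : ℝ → ℝ := fun x => (deriv (deriv Θ) x).re with ht₂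
  have hθ1 : ∀ y ∈ Set.Ioo lm ln, HasDerivAt θ (t₁ y) y := fun y hy => (hd1 y hy).real_of_complex
  have hθ2 : ∀ y ∈ Set.Ioo lm ln, HasDerivAt t₁ (t₂ y) y := fun y hy => (hd2 y hy).real_of_complex
  have hrel : ∀ y ∈ Set.Ioo lm ln, D.eval y = 2 * Real.cos (p * θ y) := by
    intro y hy
    have h1 := boundary_relation p D Θ y (han y hy).continuousAt hdisc'
    have h2 : Θ y = ((θ y : ℝ) : ℂ) := Complex.ext (by simp [hθ]) (by simp [hreal y hy])
    rw [h2, aeval_ofReal_eq] at h1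
    exact_mod_cast h1.symm
  have hrel1 : ∀ y ∈ Set.Ioo lm ln,
      D.derivative.eval y = -2 * p * Real.sin (p * θ y) * t₁ y := by
    intro y hy
    have h1 : HasDerivAt (fun x => 2 * Real.cos (p * θ x)) _ y :=
      (((hθ1 y hy).const_mul (p : ℝ)).cos).const_mul 2
    have h2 := h1.congr_of_eventuallyEq ((hnhds y hy).mono fun x hx => hrel x hx)
    rw [(D.hasDerivAt y).unique h2]; ring
  have hrel2 : ∀ y ∈ Set.Ioo lm ln, D.derivative.derivative.eval y =
      -2 * p ^ 2 * Real.cos (p * θ y) * t₁ y ^ 2 - 2 * p * Real.sin (p * θ y) * t₂ y := by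
    intro y hy
    have h1 : HasDerivAt (fun x => -2 * p * Real.sin (p * θ x) * t₁ x) _ y :=
      ((((hθ1 y hy).const_mul (p : ℝ)).sin).const_mul (-2 * (p : ℝ))).mul (hθ2 y hy)
    have h2 := h1.congr_of_eventuallyEq ((hnhds y hy).mono fun x hx => hrel1 x hx)
    rw [(D.derivative.hasDerivAt y).unique h2]; ring
  have hband : ∀ y ∈ Set.Ioo lm ln, D.eval y ^ 2 ≤ 4 := by
    intro y hy
    rw [hrel y hy]
    nlinarith [Real.cos_sq_le_one (p * θ y)]
  obtain ⟨ε, hε, hgap⟩ := hgap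
  have hgapD : ∀ y ∈ Set.Ioo (lm - ε) lm ∪ Set.Ioo ln (ln + ε), 4 < D.eval y ^ 2 := by
    intro y hy
    by_contra hcon
    refine hgap y hy (mem_spectrum_of_abs_discriminant_le p hp V hV H hH y (D.eval y) ?_ ?_)
    · exact abs_le_of_sq_le_sq (by linarith) (by norm_num)
    · rw [hΔ, aeval_ofReal_eq]
  have hid1 : ∀ y ∈ Set.Ioo lm ln,
      (p : ℝ) ^ 2 * (4 - D.eval y ^ 2) * t₁ y ^ 2 = D.derivative.eval y ^ 2 := by
    intro y hy
    rw [hrel y hy, hrel1 y hy]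
    linear_combination (-4 * (p : ℝ) ^ 2 * t₁ y ^ 2) * Real.sin_sq_add_cos_sq (p * θ y)
  have hid2 : ∀ y ∈ Set.Ioo lm ln, D.derivative.eval y * t₂ y =
      t₁ y * (D.derivative.derivative.eval y + (p : ℝ) ^ 2 * D.eval y * t₁ y ^ 2) := by
    intro y hy
    rw [hrel y hy, hrel1 y hy, hrel2 y hy]
    ring
  have hcore : ∀ (l : Filter ℝ) (a : ℝ), l ≤ 𝓝 a → (∀ᶠ x in l, x ∈ Set.Ioo lm ln) →
      D.eval a ^ 2 = 4 → D.derivative.eval a ≠ 0 →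
      (D.eval a * D.derivative.eval a < 0 → Filter.Tendsto t₂ l Filter.atBot) ∧
      (0 < D.eval a * D.derivative.eval a → Filter.Tendsto t₂ l Filter.atTop) := by
    intro l a hla hl h4 hne
    exact tendsto_second_derivative p hpR t₁ t₂ (fun x => D.eval x)
      (fun x => D.derivative.eval x) (fun x => D.derivative.derivative.eval x) _ _ _
      ((D.continuous.tendsto a).mono_left hla)
      ((D.derivative.continuous.tendsto a).mono_left hla)
      ((D.derivative.derivative.continuous.tendsto a).mono_left hla) h4 hne
      (hl.mono hnonneg) (hl.mono hid1) (hl.mono hid2)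
  have hleft := left_edge D hroots lm (lm - ε) ln (by linarith) hlt hband
    (fun y hy => hgapD y (Or.inl hy))
  have hright := right_edge D hroots ln lm (ln + ε) hlt (by linarith) hband
    (fun y hy => hgapD y (Or.inr hy))
  exact ⟨him2,
    (hcore _ lm nhdsWithin_le_nhds (Ioo_mem_nhdsGT hlt) hleft.1
      (right_ne_zero_of_mul hleft.2.ne)).1 hleft.2,
    (hcore _ ln nhdsWithin_le_nhds (Ioo_mem_nhdsLT hlt) hright.1
      (right_ne_zero_of_mul hright.2.ne')).2 hright.2⟩
end
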